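/- (Local-to-global pseudolabel-correction inequality.) Fix a label i, η ≥ 0, c > 0 and 0 ≤ q < 1. Suppose M'_η(S_i^good, F) satisfies (c,q,η)-robust expansion on (S_i^bad, S_i^good), and f ∈ F satisfies P({x : f(x) ≠ ỹ(x) or x ∉ R_η(f)} | S_i) ≤ 1 − q − α_i. Let M_i = {x ∈ S_i : f(x) ≠ y(x)}, U_i = S_i \ M_i, and c' = c/(1 − α_i + c·α_i). Then P(U_i | S_i^bad) ≥ c'·P(U_i ∩ R_η(f) | S_i) + c'·α_i·P(U_i ∩ (X \ R_η(f)) | S_i^bad). -/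

import Mathlib

/-!
Let `C` be the set where `f` is correct, `R` the set of robust points of `f`, and write `S`, `G`,
`B` for `S_i`, `S_i^good`, `S_i^bad`. A robust point with prediction `i` has at least a `1 - η`
share of its neighborhood weight inside `{f = i}`, so `{f = i}` is a competitor in the infimum
defining the robust neighborhood size of `C ∩ R ∩ G`. Since `f = i` means that `f` is correct on
`B`, expansion gives `c * P(C ∩ R | G) ≤ P(C | B)`. Expansion is applicable because a point of `G`
where `f` agrees with the pseudolabel is classified correctly: the bound on disagreement thus yields
`q ≤ (1 - α) * P(C ∩ R | G)`, so `P(C ∩ R | G)` is zero or exceeds `q`. By total probability over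
`S = G ∪ B`, the right-hand side of the theorem is `c'` times
`(1 - α) * P(C ∩ R | G) + α * P(C | B)`, and `c'` is exactly the constant that makes this at most
`P(C | B)`.
-/

open Finset
open scoped Classical

noncomputable section

variable {X Y : Type*} [Fintype X] [DecidableEq X] [DecidableEq Y]

/-- Probability of a finite set of points under the weight function `μ`. -/
def Pw (μ : X → ℝ) (A : Finset X) : ℝ := ∑ x ∈ A, μ x

/-- Conditional probability `P(A | B) = P(A ∩ B) / P(B)`. -/
def cPw (μ : X → ℝ) (A B : Finset X) : ℝ := Pw μ (A ∩ B) / Pw μ B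

/-- `err(f, g | U) = P({x : f x ≠ g x} | U)`. -/
def errP {Z : Type*} (μ : X → ℝ) (f g : X → Z) (U : Finset X) : ℝ :=
  cPw μ (univ.filter fun x => f x ≠ g x) U

/-- Neighborhood of a set: `N(A) = ⋃_{x ∈ A} N(x)`. -/
def nbhd (N : X → Finset X) (A : Finset X) : Finset X := A.biUnion N

/-- `r(f, x) = P({x' : f x' ≠ f x} | N(x))`. -/
def rob (μ : X → ℝ) (N : X → Finset X) (f : X → Y) (x : X) : ℝ :=
  cPw μ (univ.filter fun x' => f x' ≠ f x) (N x)

/-- `R_η(f) = {x : r(f,x) ≤ η}`, the set of η-robust points of `f`. -/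
def Rset (μ : X → ℝ) (N : X → Finset X) (η : ℝ) (f : X → Y) : Finset X :=
  univ.filter fun x => rob μ N f x ≤ η

/-- Edge weight `w(x, x') = P({x})·P({x'})·1[x ∈ N(x')]`. -/
def wE (μ : X → ℝ) (N : X → Finset X) (x x' : X) : ℝ :=
  μ x * μ x' * (if x ∈ N x' then 1 else 0)

/-- `w(V, U) = Σ_{x ∈ V, x' ∈ U} w(x, x')`. -/
def wS (μ : X → ℝ) (N : X → Finset X) (V U : Finset X) : ℝ :=
  ∑ x ∈ V, ∑ x' ∈ U, wE μ N x x'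

/-- `P_{1-η}(U, A)`: the η-robust neighborhood size of `U` in `A`. -/
def robNbhdSize (μ : X → ℝ) (N : X → Finset X) (η : ℝ) (U A : Finset X) : ℝ :=
  sInf {p : ℝ | ∃ V : Finset X,
    (1 - η) * wS μ N (nbhd N U) U ≤ wS μ N V U ∧ p = cPw μ V A}

/-- `M` satisfies `(c, q, η)`-robust expansion on `(A, B)`. -/
def RobustExpansion (μ : X → ℝ) (N : X → Finset X) (c q η : ℝ)
    (M : Set (Finset X)) (A B : Finset X) : Prop :=
  ∀ U ∈ M, cPw μ U B > q → robNbhdSize μ N η U A > c * cPw μ U B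

/-- `M` satisfies `(c, q)`-expansion on `(A, B)` (the `η = 0` case). -/
def Expansion (μ : X → ℝ) (N : X → Finset X) (c q : ℝ)
    (M : Set (Finset X)) (A B : Finset X) : Prop :=
  ∀ U ∈ M, cPw μ U B > q → cPw μ (nbhd N U) A > c * cPw μ U B

/-- Covered set `S = {x : ỹ x ≠ ∅}`. -/
def Scov (yt : X → Option Y) : Finset X := univ.filter fun x => yt x ≠ none

/-- `S_i = S ∩ X_i`. -/
def SiSet (y : X → Y) (yt : X → Option Y) (i : Y) : Finset X :=
  univ.filter fun x => yt x ≠ none ∧ y x = i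

/-- `T_i = T ∩ X_i`. -/
def TiSet (y : X → Y) (yt : X → Option Y) (i : Y) : Finset X :=
  univ.filter fun x => yt x = none ∧ y x = i

/-- `S_i^good = {x ∈ S_i : ỹ x = y x}`. -/
def SiGood (y : X → Y) (yt : X → Option Y) (i : Y) : Finset X :=
  univ.filter fun x => yt x = some (y x) ∧ y x = i

/-- `S_i^bad = S_i \ S_i^good`. -/
def SiBad (y : X → Y) (yt : X → Option Y) (i : Y) : Finset X :=
  SiSet y yt i \ SiGood y yt i

/-- `α_i = P(S_i^bad | S_i)`. -/
def alphaW (μ : X → ℝ) (y : X → Y) (yt : X → Option Y) (i : Y) : ℝ :=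
  cPw μ (SiBad y yt i) (SiSet y yt i)

/-- `M_η(B, F) = {R_η(f) ∩ U(B,f) : f ∈ F}`, the η-robust mistake sets on `B`. -/
def MFam (μ : X → ℝ) (N : X → Finset X) (η : ℝ) (y : X → Y)
    (B : Finset X) (F : Set (X → Y)) : Set (Finset X) :=
  {A | ∃ f ∈ F, A = Rset μ N η f ∩ (B.filter fun x => f x ≠ y x)}

/-- `M'_η(B, F) = {R_η(f) ∩ (B \ U(B,f)) : f ∈ F}`, the η-robust non-mistake sets on `B`. -/
def MFam' (μ : X → ℝ) (N : X → Finset X) (η : ℝ) (y : X → Y)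
    (B : Finset X) (F : Set (X → Y)) : Set (Finset X) :=
  {A | ∃ f ∈ F, A = Rset μ N η f ∩ (B.filter fun x => f x = y x)}

section ConditionalProbability

variable {Ω : Type*} {μ : Ω → ℝ}

theorem Pw_nonneg (hμ : ∀ x, 0 ≤ μ x) (A : Finset Ω) : 0 ≤ Pw μ A :=
  sum_nonneg fun x _ => hμ x

theorem Pw_mono (hμ : ∀ x, 0 ≤ μ x) {A B : Finset Ω} (h : A ⊆ B) : Pw μ A ≤ Pw μ B :=
  sum_le_sum_of_subset_of_nonneg h fun x _ _ => hμ x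

variable [DecidableEq Ω]

theorem Pw_sdiff_add_Pw {A B : Finset Ω} (h : B ⊆ A) : Pw μ (A \ B) + Pw μ B = Pw μ A :=
  sum_sdiff h

theorem Pw_inter_add_Pw_sdiff_inter (A R C : Finset Ω) :
    Pw μ ((A ∩ R) ∩ C) + Pw μ ((A \ R) ∩ C) = Pw μ (A ∩ C) := by
  rw [inter_right_comm, sdiff_inter_right_comm]
  exact sum_inter_add_sum_sdiff (A ∩ C) R μ

theorem cPw_nonneg (hμ : ∀ x, 0 ≤ μ x) (A C : Finset Ω) : 0 ≤ cPw μ A C :=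
  div_nonneg (Pw_nonneg hμ _) (Pw_nonneg hμ _)

theorem cPw_le_one (hμ : ∀ x, 0 ≤ μ x) (A C : Finset Ω) : cPw μ A C ≤ 1 :=
  div_le_one_of_le₀ (Pw_mono hμ inter_subset_right) (Pw_nonneg hμ C)

theorem cPw_mono (hμ : ∀ x, 0 ≤ μ x) {A B C : Finset Ω} (h : A ∩ C ⊆ B ∩ C) :
    cPw μ A C ≤ cPw μ B C :=
  div_le_div_of_nonneg_right (Pw_mono hμ h) (Pw_nonneg hμ C)

theorem cPw_congr {A B C : Finset Ω} (h : A ∩ C = B ∩ C) : cPw μ A C = cPw μ B C := by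
  rw [cPw, cPw, h]

theorem cPw_inter_left_of_subset {S C : Finset Ω} (h : C ⊆ S) (A : Finset Ω) :
    cPw μ (S ∩ A) C = cPw μ A C :=
  cPw_congr <| by rw [inter_comm S A, inter_assoc, inter_eq_right.2 h]

theorem cPw_inter_add_cPw_sdiff (A R C : Finset Ω) :
    cPw μ (A ∩ R) C + cPw μ (A \ R) C = cPw μ A C := by
  rw [cPw, cPw, cPw, ← add_div, Pw_inter_add_Pw_sdiff_inter]

theorem cPw_compl [Fintype Ω] {C : Finset Ω} (hC : Pw μ C ≠ 0) (A : Finset Ω) :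
    cPw μ Aᶜ C = 1 - cPw μ A C := by
  have h := cPw_inter_add_cPw_sdiff (μ := μ) univ A C
  rw [univ_inter, ← compl_eq_univ_sdiff] at h
  rw [eq_sub_iff_add_eq', h, cPw, univ_inter, div_self hC]

theorem cPw_total_probability {G S : Finset Ω} (hGS : G ⊆ S) (hS : Pw μ S ≠ 0)
    (hG : Pw μ G ≠ 0) (hB : Pw μ (S \ G) ≠ 0) (A : Finset Ω) :
    cPw μ A S = (1 - cPw μ (S \ G) S) * cPw μ A G + cPw μ (S \ G) S * cPw μ A (S \ G) := by
  have hAS : Pw μ (A ∩ S) = Pw μ (A ∩ G) + Pw μ (A ∩ (S \ G)) := by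
    rw [inter_comm A S, ← Pw_inter_add_Pw_sdiff_inter S G A, inter_eq_right.2 hGS,
      inter_comm A G, inter_comm A]
  have hSG : 1 - cPw μ (S \ G) S = Pw μ G / Pw μ S := by
    rw [cPw, inter_eq_left.2 sdiff_subset, one_sub_div hS, ← Pw_sdiff_add_Pw hGS,
      add_sub_cancel_left]
  rw [hSG, cPw, cPw, cPw, cPw, hAS, inter_eq_left.2 sdiff_subset]
  field_simp

end ConditionalProbability

section RobustNeighborhood

variable {Ω Z : Type*} [DecidableEq Ω] {μ : Ω → ℝ} {N : Ω → Finset Ω} {η : ℝ}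

theorem wS_eq_sum_mul_Pw_inter (V U : Finset Ω) :
    wS μ N V U = ∑ x ∈ U, μ x * Pw μ (V ∩ N x) := by
  simp only [wS, wE, Pw, mul_ite, mul_one, mul_zero]
  rw [sum_comm]
  refine sum_congr rfl fun x _ => ?_
  rw [mul_sum, ← filter_mem_eq_inter, sum_filter]
  exact sum_congr rfl fun z _ => by rw [mul_comm (μ z)]

theorem wS_nbhd_self (U : Finset Ω) : wS μ N (nbhd N U) U = ∑ x ∈ U, μ x * Pw μ (N x) := by
  rw [wS_eq_sum_mul_Pw_inter]
  refine sum_congr rfl fun x hx => ?_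
  rw [nbhd, inter_eq_right.2 (subset_biUnion_of_mem N hx)]

theorem robNbhdSize_le_cPw (hμ : ∀ x, 0 ≤ μ x) {U V : Finset Ω}
    (h : (1 - η) * wS μ N (nbhd N U) U ≤ wS μ N V U) (A : Finset Ω) :
    robNbhdSize μ N η U A ≤ cPw μ V A := by
  refine csInf_le ⟨0, ?_⟩ ⟨V, h, rfl⟩
  rintro _ ⟨V', -, rfl⟩
  exact cPw_nonneg hμ V' A

variable [Fintype Ω] [DecidableEq Z] {f : Ω → Z}

theorem one_sub_mul_Pw_le_of_mem_Rset {x : Ω} (hx : x ∈ Rset μ N η f) (hN : 0 < Pw μ (N x)) :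
    (1 - η) * Pw μ (N x) ≤ Pw μ (({x' | f x' = f x} : Finset Ω) ∩ N x) := by
  have hrob : cPw μ ({x' | f x' = f x} : Finset Ω)ᶜ (N x) ≤ η := by
    rw [compl_filter]
    exact (mem_filter.1 hx).2
  rw [cPw_compl hN.ne'] at hrob
  rw [← le_div_iff₀ hN]
  exact sub_le_comm.1 hrob

theorem robNbhdSize_le_cPw_fiber (hμ : ∀ x, 0 ≤ μ x) {U : Finset Ω} {i : Z}
    (hN : ∀ x ∈ U, 0 < Pw μ (N x)) (hUR : U ⊆ Rset μ N η f) (hUi : ∀ x ∈ U, f x = i)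
    (A : Finset Ω) : robNbhdSize μ N η U A ≤ cPw μ {x | f x = i} A := by
  refine robNbhdSize_le_cPw hμ ?_ A
  rw [wS_nbhd_self, wS_eq_sum_mul_Pw_inter, mul_sum]
  refine sum_le_sum fun x hx => ?_
  rw [mul_left_comm, ← hUi x hx]
  exact mul_le_mul_of_nonneg_left (one_sub_mul_Pw_le_of_mem_Rset (hUR hx) (hN x hx)) (hμ x)

theorem RobustExpansion.mul_cPw_le_cPw_fiber {c q : ℝ} {M : Set (Finset Ω)} {A B U : Finset Ω}
    {i : Z} (hexp : RobustExpansion μ N c q η M A B) (hμ : ∀ x, 0 ≤ μ x)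
    (hN : ∀ x ∈ U, 0 < Pw μ (N x)) (hUM : U ∈ M) (hUR : U ⊆ Rset μ N η f)
    (hUi : ∀ x ∈ U, f x = i) (hU : cPw μ U B = 0 ∨ q < cPw μ U B) :
    c * cPw μ U B ≤ cPw μ {x | f x = i} A := by
  rcases hU with hzero | hlarge
  · rw [hzero, mul_zero]
    exact cPw_nonneg hμ _ _
  · exact (hexp U hUM hlarge).le.trans (robNbhdSize_le_cPw_fiber hμ hN hUR hUi A)

end RobustNeighborhood

section Pseudolabels

variable {Ω Z : Type*} [Fintype Ω] [DecidableEq Z]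

/-- The set of points classified correctly by `f`, the complement of the mistake set. It ranges over
all points, so the set `U_i` of the paper is its intersection with `S_i`. -/
def correctSet (f y : Ω → Z) : Finset Ω := {x | f x = y x}

theorem sdiff_filter_ne_eq_inter_correctSet [DecidableEq Ω] (S : Finset Ω) (f y : Ω → Z) :
    S \ {x ∈ S | f x ≠ y x} = S ∩ correctSet f y := by
  ext x
  simp only [correctSet, mem_sdiff, mem_filter, mem_inter, mem_univ, true_and]
  tauto

variable {y : Ω → Z} {yt : Ω → Option Z} {i : Z}

theorem mem_SiSet {x : Ω} : x ∈ SiSet y yt i ↔ yt x ≠ none ∧ y x = i := by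
  simp [SiSet]

theorem mem_SiGood {x : Ω} : x ∈ SiGood y yt i ↔ yt x = some (y x) ∧ y x = i := by
  simp [SiGood]

theorem SiGood_subset_SiSet : SiGood y yt i ⊆ SiSet y yt i := fun x hx => by
  rw [mem_SiGood] at hx
  exact mem_SiSet.2 ⟨by simp [hx.1], hx.2⟩

variable [DecidableEq Ω]

theorem SiBad_subset_SiSet : SiBad y yt i ⊆ SiSet y yt i := sdiff_subset

theorem filter_eq_inter_eq_correctSet_inter {A : Finset Ω} (hA : ∀ x ∈ A, y x = i) (f : Ω → Z) :
    ({x | f x = i} : Finset Ω) ∩ A = correctSet f y ∩ A := by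
  ext x
  simp only [correctSet, mem_inter, mem_filter, mem_univ, true_and]
  exact and_congr_left fun hx => by rw [hA x hx]

variable {μ : Ω → ℝ}

theorem Pw_SiSet_pos (hμ : ∀ x, 0 ≤ μ x) (hSb : 0 < Pw μ (SiBad y yt i)) :
    0 < Pw μ (SiSet y yt i) :=
  hSb.trans_le (Pw_mono hμ SiBad_subset_SiSet)

theorem alphaW_pos (hμ : ∀ x, 0 ≤ μ x) (hSb : 0 < Pw μ (SiBad y yt i)) :
    0 < alphaW μ y yt i := by
  rw [alphaW, cPw, inter_eq_left.2 SiBad_subset_SiSet]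
  exact div_pos hSb (Pw_SiSet_pos hμ hSb)

theorem cPw_SiSet (hμ : ∀ x, 0 ≤ μ x) (hSg : 0 < Pw μ (SiGood y yt i))
    (hSb : 0 < Pw μ (SiBad y yt i)) (A : Finset Ω) :
    cPw μ A (SiSet y yt i) = (1 - alphaW μ y yt i) * cPw μ A (SiGood y yt i)
      + alphaW μ y yt i * cPw μ A (SiBad y yt i) :=
  cPw_total_probability SiGood_subset_SiSet (Pw_SiSet_pos hμ hSb).ne' hSg.ne' hSb.ne' A

theorem le_one_sub_alphaW_mul_cPw_correctSet_inter (hμ : ∀ x, 0 ≤ μ x)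
    (hSg : 0 < Pw μ (SiGood y yt i)) (hSb : 0 < Pw μ (SiBad y yt i)) {f : Ω → Z} {R : Finset Ω}
    {q : ℝ} (h : cPw μ {x | some (f x) ≠ yt x ∨ x ∉ R} (SiSet y yt i)
      ≤ 1 - q - alphaW μ y yt i) :
    q ≤ (1 - alphaW μ y yt i) * cPw μ (correctSet f y ∩ R) (SiGood y yt i) := by
  set α := alphaW μ y yt i
  set E : Finset Ω := {x | some (f x) ≠ yt x ∨ x ∉ R}
  have hα0 : 0 ≤ α := cPw_nonneg hμ _ _
  have hα1 : 0 ≤ 1 - α := sub_nonneg.2 (cPw_le_one hμ _ _)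
  have hgood : cPw μ Eᶜ (SiGood y yt i) ≤ cPw μ (correctSet f y ∩ R) (SiGood y yt i) := by
    refine cPw_mono hμ fun x hx => ?_
    simp only [E, correctSet, mem_inter, mem_compl, mem_filter, mem_univ, true_and, not_or,
      not_not, mem_SiGood] at hx ⊢
    obtain ⟨⟨hagree, hR⟩, hyt, hyi⟩ := hx
    exact ⟨⟨Option.some.inj (hagree.trans hyt), hR⟩, hyt, hyi⟩
  have hcover : q + α ≤ (1 - α) * cPw μ (correctSet f y ∩ R) (SiGood y yt i) + α * 1 :=
    calc q + α ≤ 1 - cPw μ E (SiSet y yt i) := by linarith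
      _ = cPw μ Eᶜ (SiSet y yt i) := (cPw_compl (Pw_SiSet_pos hμ hSb).ne' E).symm
      _ = (1 - α) * cPw μ Eᶜ (SiGood y yt i) + α * cPw μ Eᶜ (SiBad y yt i) :=
        cPw_SiSet hμ hSg hSb Eᶜ
      _ ≤ (1 - α) * cPw μ (correctSet f y ∩ R) (SiGood y yt i) + α * 1 := by
        gcongr
        exact cPw_le_one hμ _ _
  linarith

theorem RobustExpansion.mul_cPw_SiGood_le_cPw_SiBad {N : Ω → Finset Ω} {F : Set (Ω → Z)}
    {f : Ω → Z} {η c q : ℝ} (hμ : ∀ x, 0 ≤ μ x) (hN : ∀ x, 0 < Pw μ (N x)) (hf : f ∈ F)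
    (hexp : RobustExpansion μ N c q η (MFam' μ N η y (SiGood y yt i) F)
      (SiBad y yt i) (SiGood y yt i))
    (h : cPw μ (correctSet f y ∩ Rset μ N η f) (SiGood y yt i) = 0 ∨
      q < cPw μ (correctSet f y ∩ Rset μ N η f) (SiGood y yt i)) :
    c * cPw μ (correctSet f y ∩ Rset μ N η f) (SiGood y yt i)
      ≤ cPw μ (correctSet f y) (SiBad y yt i) := by
  set G := SiGood y yt i
  set W := Rset μ N η f ∩ {x ∈ G | f x = y x}
  have hW : cPw μ (correctSet f y ∩ Rset μ N η f) G = cPw μ W G := cPw_congr <| by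
    ext x
    simp only [W, correctSet, mem_inter, mem_filter, mem_univ, true_and]
    tauto
  have hWi : ∀ x ∈ W, f x = i := fun x hx => by
    obtain ⟨hG, hfy⟩ := mem_filter.1 (mem_inter.1 hx).2
    exact hfy.trans (mem_SiGood.1 hG).2
  have hbad : ∀ x ∈ SiBad y yt i, y x = i := fun x hx =>
    (mem_SiSet.1 (SiBad_subset_SiSet hx)).2
  rw [hW] at h ⊢
  rw [← cPw_congr (filter_eq_inter_eq_correctSet_inter hbad f)]
  exact hexp.mul_cPw_le_cPw_fiber hμ (fun x _ => hN x) ⟨f, hf, rfl⟩ inter_subset_left hWi h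

end Pseudolabels

theorem div_mul_convexCombination_le {α c g u : ℝ} (hα0 : 0 < α) (hα1 : α ≤ 1) (hc : 0 < c)
    (h : c * g ≤ u) : c / (1 - α + c * α) * ((1 - α) * g + α * u) ≤ u := by
  have hden : 0 < 1 - α + c * α := add_pos_of_nonneg_of_pos (sub_nonneg.2 hα1) (mul_pos hc hα0)
  rw [div_mul_eq_mul_div, div_le_iff₀ hden]
  calc c * ((1 - α) * g + α * u) = (1 - α) * (c * g) + c * α * u := by ring
    _ ≤ (1 - α) * u + c * α * u := by gcongr
    _ = u * (1 - α + c * α) := by ring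

theorem local_to_global_general
    {μ : X → ℝ} {N : X → Finset X} {y : X → Y} {yt : X → Option Y}
    {F : Set (X → Y)} {i : Y} {f : X → Y} {η c q : ℝ}
    (hμ : ∀ x, 0 ≤ μ x)
    (hNpos : ∀ x, 0 < Pw μ (N x))
    (hSg : 0 < Pw μ (SiGood y yt i))
    (hSb : 0 < Pw μ (SiBad y yt i))
    (hc : 0 < c)
    (hf : f ∈ F)
    (hexp : RobustExpansion μ N c q η (MFam' μ N η y (SiGood y yt i) F)
      (SiBad y yt i) (SiGood y yt i))
    (hcond : cPw μ {x | some (f x) ≠ yt x ∨ x ∉ Rset μ N η f} (SiSet y yt i)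
      ≤ 1 - q - alphaW μ y yt i) :
    cPw μ (SiSet y yt i \ {x ∈ SiSet y yt i | f x ≠ y x}) (SiBad y yt i) ≥
      c / (1 - alphaW μ y yt i + c * alphaW μ y yt i) *
          cPw μ ((SiSet y yt i \ {x ∈ SiSet y yt i | f x ≠ y x}) ∩ Rset μ N η f) (SiSet y yt i)
        + c / (1 - alphaW μ y yt i + c * alphaW μ y yt i) * alphaW μ y yt i *
          cPw μ ((SiSet y yt i \ {x ∈ SiSet y yt i | f x ≠ y x}) ∩ (univ \ Rset μ N η f))
            (SiBad y yt i) := by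
  set α := alphaW μ y yt i
  set R := Rset μ N η f
  set C := correctSet f y
  have hα0 : 0 < α := alphaW_pos hμ hSb
  have hα1 : α ≤ 1 := cPw_le_one hμ _ _
  have hthreshold : cPw μ (C ∩ R) (SiGood y yt i) = 0 ∨ q < cPw μ (C ∩ R) (SiGood y yt i) := by
    have hq : q ≤ (1 - α) * cPw μ (C ∩ R) (SiGood y yt i) :=
      le_one_sub_alphaW_mul_cPw_correctSet_inter hμ hSg hSb hcond
    refine (cPw_nonneg hμ _ _).eq_or_lt'.imp_right fun hpos => hq.trans_lt ?_
    exact mul_lt_of_lt_one_left hpos (sub_lt_self 1 hα0)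
  have hexpand : c * cPw μ (C ∩ R) (SiGood y yt i) ≤ cPw μ C (SiBad y yt i) :=
    hexp.mul_cPw_SiGood_le_cPw_SiBad hμ hNpos hf hthreshold
  rw [ge_iff_le, sdiff_filter_ne_eq_inter_correctSet, inter_assoc, inter_assoc,
    ← compl_eq_univ_sdiff, ← sdiff_eq_inter_compl, cPw_inter_left_of_subset SiBad_subset_SiSet,
    cPw_inter_left_of_subset Subset.rfl, cPw_inter_left_of_subset SiBad_subset_SiSet]
  calc
    _ = c / (1 - α + c * α)
        * ((1 - α) * cPw μ (C ∩ R) (SiGood y yt i) + α * cPw μ C (SiBad y yt i)) := by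
      rw [cPw_SiSet hμ hSg hSb (C ∩ R), ← cPw_inter_add_cPw_sdiff C R (SiBad y yt i)]
      ring
    _ ≤ cPw μ C (SiBad y yt i) := div_mul_convexCombination_le hα0 hα1 hc hexpand

/-- Lemma `lemma:local-to-global`:
local-to-global pseudolabel-correction inequality. -/
theorem local_to_global
    (μ : X → ℝ) (N : X → Finset X) (y : X → Y) (yt : X → Option Y)
    (F : Set (X → Y)) (i : Y) (f : X → Y) (η c q : ℝ)
    (hμ : ∀ x, 0 ≤ μ x) (hμ1 : ∑ x, μ x = 1)
    (hNsym : ∀ x x', x ∈ N x' ↔ x' ∈ N x)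
    (hNpos : ∀ x, 0 < Pw μ (N x))
    (hSi : 0 < Pw μ (SiSet y yt i))
    (hSg : 0 < Pw μ (SiGood y yt i))
    (hSb : 0 < Pw μ (SiBad y yt i))
    (hα0 : 0 < alphaW μ y yt i) (hα : alphaW μ y yt i < 1 / 2)
    (hη : 0 ≤ η) (hc : 0 < c) (hq0 : 0 ≤ q) (hq1 : q < 1)
    (hf : f ∈ F)
    (hexp : RobustExpansion μ N c q η (MFam' μ N η y (SiGood y yt i) F)
      (SiBad y yt i) (SiGood y yt i))
    (hcond : cPw μ (univ.filter fun x => some (f x) ≠ yt x ∨ x ∉ Rset μ N η f)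
        (SiSet y yt i) ≤ 1 - q - alphaW μ y yt i) :
    cPw μ (SiSet y yt i \ ((SiSet y yt i).filter fun x => f x ≠ y x)) (SiBad y yt i) ≥
      c / (1 - alphaW μ y yt i + c * alphaW μ y yt i) *
          cPw μ ((SiSet y yt i \ ((SiSet y yt i).filter fun x => f x ≠ y x)) ∩
            Rset μ N η f) (SiSet y yt i)
        + c / (1 - alphaW μ y yt i + c * alphaW μ y yt i) * alphaW μ y yt i *
          cPw μ ((SiSet y yt i \ ((SiSet y yt i).filter fun x => f x ≠ y x)) ∩
            (univ \ Rset μ N η f)) (SiBad y yt i) :=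
  local_to_global_general hμ hNpos hSg hSb hc hf hexp hcond
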